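/- arXiv:1711.10170 — 8 statements merged into one kernel-verified Lean document; each statement's English description precedes it below -/
import Mathlib

section
/- Let τ : P × P → P be jointly monotone (A ≤ A′ and B ≤ B′ imply A τ B ≤ A′ τ B′) and positively homogeneous (τ(λA, λB) = λ·τ(A,B) for every λ > 0). Then for all A, B, X, Y ∈ P one has d_T(X τ A, Y τ B) ≤ max{d_T(X, Y), d_T(A, B)}. -/
/-!
The Thompson metric is controlled by the order: for `A, B ∈ P` and `r ≥ 0`,
`d_T(A, B) ≤ r` if and only if `e^{-r} A ≤ B ≤ e^r A` (`dT_le_iff`). Indeed the norm of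
`log (A^{-1/2} B A^{-1/2})` is at most `r` exactly when the spectrum of `A^{-1/2} B A^{-1/2}` lies
in `[e^{-r}, e^r]`, and conjugation by `A^{1/2}` turns the corresponding operator inequalities into
inequalities between `A` and `B`.

With `r = max (d_T(X, Y)) (d_T(A, B))`, both pairs satisfy these inequalities, and monotonicity
together with homogeneity of `τ` transfers them to the pair `τ X A`, `τ Y B`.
-/

open scoped ComplexOrder

variable {H : Type*} [NormedAddCommGroup H] [InnerProductSpace ℂ H] [CompleteSpace H]

/-- Membership in `P`, the cone of positive invertible bounded linear operators on `H`. -/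
def PosInv (A : H →L[ℂ] H) : Prop := A.IsPositive ∧ IsUnit A

/-- The Loewner order: `A ≤ B` iff `B - A` is positive. -/
def Loe (A B : H →L[ℂ] H) : Prop := (B - A).IsPositive

/-- The strict order `A < B`, meaning `B - A ∈ P`. -/
def LoeLT (A B : H →L[ℂ] H) : Prop := PosInv (B - A)

/-- `A^{1/2}` via the continuous functional calculus. -/
noncomputable def opSqrt (A : H →L[ℂ] H) : H →L[ℂ] H := cfc Real.sqrt A

/-- `A^{-1/2}` via the continuous functional calculus. -/
noncomputable def opInvSqrt (A : H →L[ℂ] H) : H →L[ℂ] H :=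
  cfc (fun x : ℝ => (Real.sqrt x)⁻¹) A

/-- The Thompson metric `d_T(A,B) = ‖log (A^{-1/2} B A^{-1/2})‖`. -/
noncomputable def dT (A B : H →L[ℂ] H) : ℝ :=
  ‖cfc Real.log (opInvSqrt A * B * opInvSqrt A)‖

/-- The mean induced by a function `f`: `A σ_f B = A^{1/2} f(A^{-1/2} B A^{-1/2}) A^{1/2}`. -/
noncomputable def indMean (f : ℝ → ℝ) (A B : H →L[ℂ] H) : H →L[ℂ] H :=
  opSqrt A * cfc f (opInvSqrt A * B * opInvSqrt A) * opSqrt A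

/-- Convergence in the strong operator topology. -/
def SConv (A : ℕ → H →L[ℂ] H) (A0 : H →L[ℂ] H) : Prop :=
  ∀ x : H, Filter.Tendsto (fun k => A k x) Filter.atTop (nhds (A0 x))

lemma loe_iff_le (A B : H →L[ℂ] H) : Loe A B ↔ A ≤ B :=
  (ContinuousLinearMap.le_def A B).symm

lemma PosInv.nonneg {A : H →L[ℂ] H} (hA : PosInv A) : 0 ≤ A :=
  (ContinuousLinearMap.nonneg_iff_isPositive A).2 hA.1

lemma PosInv.smul {A : H →L[ℂ] H} (hA : PosInv A) {l : ℝ} (hl : 0 < l) : PosInv (l • A) :=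
  ⟨(ContinuousLinearMap.nonneg_iff_isPositive _).1 (smul_nonneg hl.le hA.nonneg),
    hA.2.smul (Units.mk0 l hl.ne')⟩

lemma PosInv.spectrum_pos {A : H →L[ℂ] H} (hA : PosInv A) {x : ℝ} (hx : x ∈ spectrum ℝ A) :
    0 < x := by
  have h0 : 0 ≤ x := spectrum_nonneg_of_nonneg hA.nonneg hx
  refine lt_of_le_of_ne h0 ?_
  rintro rfl
  exact spectrum.zero_notMem ℝ hA.2 hx

lemma PosInv.continuousOn_inv_sqrt {A : H →L[ℂ] H} (hA : PosInv A) :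
    ContinuousOn (fun x : ℝ => (Real.sqrt x)⁻¹) (spectrum ℝ A) :=
  Real.continuous_sqrt.continuousOn.inv₀ fun _ hx => (Real.sqrt_pos.2 (hA.spectrum_pos hx)).ne'

lemma opSqrt_mul_self {A : H →L[ℂ] H} (hA : PosInv A) : opSqrt A * opSqrt A = A := by
  have hs : IsSelfAdjoint A := .of_nonneg hA.nonneg
  have hc : ContinuousOn Real.sqrt (spectrum ℝ A) := Real.continuous_sqrt.continuousOn
  rw [opSqrt, ← cfc_mul _ _ A hc hc]
  conv_rhs => rw [← cfc_id ℝ A]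
  exact cfc_congr fun x hx => Real.mul_self_sqrt (hA.spectrum_pos hx).le

lemma opSqrt_mul_opInvSqrt {A : H →L[ℂ] H} (hA : PosInv A) : opSqrt A * opInvSqrt A = 1 := by
  have hs : IsSelfAdjoint A := .of_nonneg hA.nonneg
  rw [opSqrt, opInvSqrt,
    ← cfc_mul _ _ A Real.continuous_sqrt.continuousOn hA.continuousOn_inv_sqrt, ← cfc_one ℝ A]
  exact cfc_congr fun x hx => mul_inv_cancel₀ (Real.sqrt_pos.2 (hA.spectrum_pos hx)).ne'

lemma opInvSqrt_mul_opSqrt {A : H →L[ℂ] H} (hA : PosInv A) : opInvSqrt A * opSqrt A = 1 := by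
  rw [opSqrt, opInvSqrt, cfc_commute_cfc]
  exact opSqrt_mul_opInvSqrt hA

lemma isSelfAdjoint_opSqrt (A : H →L[ℂ] H) : IsSelfAdjoint (opSqrt A) := cfc_predicate _ A

lemma isSelfAdjoint_opInvSqrt (A : H →L[ℂ] H) : IsSelfAdjoint (opInvSqrt A) := cfc_predicate _ A

lemma opSqrt_conj {A : H →L[ℂ] H} (hA : PosInv A) (B : H →L[ℂ] H) :
    opSqrt A * (opInvSqrt A * B * opInvSqrt A) * opSqrt A = B := by
  calc _ = (opSqrt A * opInvSqrt A) * B * (opInvSqrt A * opSqrt A) := by simp only [mul_assoc]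
    _ = B := by rw [opSqrt_mul_opInvSqrt hA, opInvSqrt_mul_opSqrt hA, one_mul, mul_one]

lemma opInvSqrt_conj {A : H →L[ℂ] H} (hA : PosInv A) (B : H →L[ℂ] H) :
    opInvSqrt A * (opSqrt A * B * opSqrt A) * opInvSqrt A = B := by
  calc _ = (opInvSqrt A * opSqrt A) * B * (opSqrt A * opInvSqrt A) := by simp only [mul_assoc]
    _ = B := by rw [opSqrt_mul_opInvSqrt hA, opInvSqrt_mul_opSqrt hA, one_mul, mul_one]

/-- Conjugation by `A^{-1/2}` preserves and reflects the order, since conjugation by `A^{1/2}`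
undoes it. -/
lemma opInvSqrt_conj_le_iff {A : H →L[ℂ] H} (hA : PosInv A) (B C : H →L[ℂ] H) :
    opInvSqrt A * B * opInvSqrt A ≤ opInvSqrt A * C * opInvSqrt A ↔ B ≤ C := by
  refine ⟨fun h => ?_, fun h => (isSelfAdjoint_opInvSqrt A).conjugate_le_conjugate h⟩
  simpa only [opSqrt_conj hA] using (isSelfAdjoint_opSqrt A).conjugate_le_conjugate h

lemma opInvSqrt_conj_smul_self {A : H →L[ℂ] H} (hA : PosInv A) (c : ℝ) :
    opInvSqrt A * (c • A) * opInvSqrt A = algebraMap ℝ (H →L[ℂ] H) c := by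
  have h := opInvSqrt_conj hA 1
  rw [mul_one, opSqrt_mul_self hA] at h
  rw [mul_smul_comm, smul_mul_assoc, h, Algebra.algebraMap_eq_smul_one]

lemma posInv_opInvSqrt_conj {A B : H →L[ℂ] H} (hA : PosInv A) (hB : PosInv B) :
    PosInv (opInvSqrt A * B * opInvSqrt A) := by
  have hu : IsUnit (opInvSqrt A) :=
    ⟨⟨_, _, opInvSqrt_mul_opSqrt hA, opSqrt_mul_opInvSqrt hA⟩, rfl⟩
  refine ⟨(ContinuousLinearMap.nonneg_iff_isPositive _).1 ?_, (hu.mul hB.2).mul hu⟩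
  exact (isSelfAdjoint_opInvSqrt A).conjugate_nonneg hB.nonneg

/-- Order characterisation of the closed balls of the Thompson metric. -/
lemma dT_le_iff {A B : H →L[ℂ] H} (hA : PosInv A) (hB : PosInv B) {r : ℝ} (hr : 0 ≤ r) :
    dT A B ≤ r ↔ Real.exp (-r) • A ≤ B ∧ B ≤ Real.exp r • A := by
  have hM := posInv_opInvSqrt_conj hA hB
  have hs : IsSelfAdjoint (opInvSqrt A * B * opInvSqrt A) := .of_nonneg hM.nonneg
  have hc : ContinuousOn Real.log (spectrum ℝ (opInvSqrt A * B * opInvSqrt A)) :=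
    Real.continuousOn_log.mono fun x hx => (hM.spectrum_pos hx).ne'
  rw [← opInvSqrt_conj_le_iff hA (Real.exp (-r) • A), ← opInvSqrt_conj_le_iff hA B,
    opInvSqrt_conj_smul_self hA, opInvSqrt_conj_smul_self hA,
    algebraMap_le_iff_le_spectrum hs, le_algebraMap_iff_spectrum_le hs, dT,
    norm_cfc_le_iff _ _ hr hc hs, ← forall₂_and]
  refine forall₂_congr fun x hx => ?_
  have hx0 := hM.spectrum_pos hx
  rw [Real.norm_eq_abs, abs_le, Real.le_log_iff_exp_le hx0, Real.log_le_iff_le_exp hx0]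

/-- If `τ : P × P → P` is jointly monotone and positively homogeneous, then
`d_T(X τ A, Y τ B) ≤ max {d_T(X,Y), d_T(A,B)}` for all `A, B, X, Y ∈ P`. -/
theorem thompson_nonexpansive
    (τ : (H →L[ℂ] H) → (H →L[ℂ] H) → (H →L[ℂ] H))
    (hmaps : ∀ A B, PosInv A → PosInv B → PosInv (τ A B))
    (hmono : ∀ A A' B B', PosInv A → PosInv A' → PosInv B → PosInv B' →
      Loe A A' → Loe B B' → Loe (τ A B) (τ A' B'))
    (hhomog : ∀ A B, PosInv A → PosInv B → ∀ l : ℝ, 0 < l → τ (l • A) (l • B) = l • τ A B)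
    (A B X Y : H →L[ℂ] H) (hA : PosInv A) (hB : PosInv B) (hX : PosInv X) (hY : PosInv Y) :
    dT (τ X A) (τ Y B) ≤ max (dT X Y) (dT A B) := by
  have hr : 0 ≤ max (dT X Y) (dT A B) := le_max_of_le_left (norm_nonneg _)
  obtain ⟨hXY₁, hXY₂⟩ := (dT_le_iff hX hY hr).1 (le_max_left _ _)
  obtain ⟨hAB₁, hAB₂⟩ := (dT_le_iff hA hB hr).1 (le_max_right _ _)
  set r := max (dT X Y) (dT A B)
  have hn := Real.exp_pos (-r)
  have hp := Real.exp_pos r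
  refine (dT_le_iff (hmaps X A hX hA) (hmaps Y B hY hB) hr).2 ⟨?_, ?_⟩
  · rw [← hhomog X A hX hA _ hn, ← loe_iff_le]
    exact hmono _ _ _ _ (hX.smul hn) hY (hA.smul hn) hB
      ((loe_iff_le _ _).2 hXY₁) ((loe_iff_le _ _).2 hAB₁)
  · rw [← hhomog X A hX hA _ hp, ← loe_iff_le]
    exact hmono _ _ _ _ hY (hX.smul hp) hB (hA.smul hp)
      ((loe_iff_le _ _).2 hXY₂) ((loe_iff_le _ _).2 hAB₂)
end

section
/- Let f : (0,∞) → (0,∞) be continuous, strictly increasing and operator monotone, and let σ_f be the induced mean, X σ_f A := X^{1/2} f(X^{-1/2} A X^{-1/2}) X^{1/2}. Then for all X, A, B ∈ P with A < B one has X σ_f A < X σ_f B; that is, σ_f is strictly monotone in its second variable. -/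
/-!
After the congruence by `X^{-1/2}` it suffices to show `f(A) < f(B)` whenever `A < B`
(`cfc_strictMono`), because congruence by the self-adjoint invertible operators `X^{±1/2}`
preserves strict positivity. Since `B - A` is positive and invertible, `A + ε ≤ B` for some `ε > 0`,
so `f(A + ε) ≤ f(B)` by operator monotonicity. Finally `f(A + ε) - f(A)` is the functional calculus
of `A` at `x ↦ f (x + ε) - f x`, which is positive on the spectrum of `A` as `f` is strictly
increasing, so it is positive and invertible.
-/

open scoped ComplexOrder

variable {H : Type*} [NormedAddCommGroup H] [InnerProductSpace ℂ H] [CompleteSpace H]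

lemma posInv_iff (A : H →L[ℂ] H) : PosInv A ↔ IsStrictlyPositive A := by
  rw [IsStrictlyPositive.iff_of_unital, ContinuousLinearMap.nonneg_iff_isPositive, PosInv]

/-- The case `X = 1`: a strictly increasing operator monotone function preserves the strict
order on positive invertible operators. -/
lemma cfc_strictMono
    (f : ℝ → ℝ)
    (hf_cont : ContinuousOn f (Set.Ioi 0))
    (hf_smono : StrictMonoOn f (Set.Ioi 0))
    (hf_opmono : ∀ A B : H →L[ℂ] H, PosInv A → PosInv B → Loe A B →
      Loe (cfc f A) (cfc f B))
    (A B : H →L[ℂ] H) (hA : IsStrictlyPositive A) (hB : IsStrictlyPositive B)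
    (hAB : IsStrictlyPositive (B - A)) :
    IsStrictlyPositive (cfc f B - cfc f A) := by
  -- On the zero space spectra are empty, and every operator is strictly positive.
  nontriviality (H →L[ℂ] H)
  have hAsa : IsSelfAdjoint A := hA.isSelfAdjoint
  obtain ⟨ε, hε, hle⟩ := (CFC.exists_pos_algebraMap_le_iff hAB.isSelfAdjoint).2
    fun x hx ↦ hAB.spectrum_pos (𝕜 := ℝ) hx
  set C : H →L[ℂ] H := A + algebraMap ℝ _ ε with hC
  have hCpos : IsStrictlyPositive C :=
    hA.add_nonneg (isStrictlyPositive_algebraMap hε).nonneg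
  have hCB : cfc f C ≤ cfc f B := by
    rw [ContinuousLinearMap.le_def]
    refine hf_opmono C B ((posInv_iff _).2 hCpos) ((posInv_iff _).2 hB) ?_
    rw [Loe, ← ContinuousLinearMap.le_def]
    simpa [hC, add_comm] using le_sub_iff_add_le.1 hle
  have hspec : ∀ x ∈ spectrum ℝ A, 0 < x := fun x hx ↦ hA.spectrum_pos hx
  have hfA : ContinuousOn f (spectrum ℝ A) := hf_cont.mono hspec
  have himg : ContinuousOn f ((fun x ↦ x + ε) '' spectrum ℝ A) := by
    refine hf_cont.mono ?_
    rintro _ ⟨x, hx, rfl⟩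
    exact add_pos (hspec x hx) hε
  have hshift : ContinuousOn (fun x ↦ f (x + ε)) (spectrum ℝ A) :=
    himg.comp (by fun_prop) (Set.mapsTo_image _ _)
  have hCeq : C = cfc (fun x : ℝ ↦ x + ε) A := by
    rw [cfc_add_const ε (fun x ↦ x) A, cfc_id' ℝ A]
  have hfC : cfc f C = cfc (fun x ↦ f (x + ε)) A := by
    rw [hCeq, cfc_comp' f (fun x ↦ x + ε) A himg]
  have hCA : IsStrictlyPositive (cfc f C - cfc f A) := by
    rw [hfC, ← cfc_sub (fun x ↦ f (x + ε)) f A hshift hfA]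
    refine (cfc_isStrictlyPositive_iff _ A (hshift.sub hfA)).2 fun x hx ↦ ?_
    exact sub_pos.2 (hf_smono (hspec x hx) (add_pos (hspec x hx) hε) (by linarith))
  exact hCA.of_le (sub_le_sub_right hCB _)

/-- If `f : (0,∞) → (0,∞)` is continuous, strictly increasing and operator monotone,
then the induced mean `σ_f` is strictly monotone in its second variable:
`A < B` implies `X σ_f A < X σ_f B`. -/
theorem indMean_strictMono_second
    (f : ℝ → ℝ)
    (hf_pos : ∀ x : ℝ, 0 < x → 0 < f x)
    (hf_cont : ContinuousOn f (Set.Ioi 0))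
    (hf_smono : StrictMonoOn f (Set.Ioi 0))
    (hf_opmono : ∀ A B : H →L[ℂ] H, PosInv A → PosInv B → Loe A B →
      Loe (cfc f A) (cfc f B))
    (X A B : H →L[ℂ] H) (hX : PosInv X) (hA : PosInv A) (hB : PosInv B)
    (hAB : LoeLT A B) :
    LoeLT (indMean f X A) (indMean f X B) := by
  rw [LoeLT, posInv_iff] at hAB ⊢
  rw [posInv_iff] at hX hA hB
  have hXsa : IsSelfAdjoint X := hX.isSelfAdjoint
  have hspec : ∀ x ∈ spectrum ℝ X, 0 < x := fun x hx ↦ hX.spectrum_pos hx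
  have hS : IsStrictlyPositive (opSqrt X) := by
    rw [opSqrt, cfc_isStrictlyPositive_iff _ X]
    exact fun x hx ↦ Real.sqrt_pos.2 (hspec x hx)
  have hT : IsStrictlyPositive (opInvSqrt X) := by
    have hcont : ContinuousOn (fun x : ℝ ↦ (Real.sqrt x)⁻¹) (spectrum ℝ X) :=
      Real.continuous_sqrt.continuousOn.inv₀ fun x hx ↦ (Real.sqrt_pos.2 (hspec x hx)).ne'
    rw [opInvSqrt, cfc_isStrictlyPositive_iff _ X hcont]
    exact fun x hx ↦ inv_pos.2 (Real.sqrt_pos.2 (hspec x hx))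
  have hconj : ∀ D : H →L[ℂ] H, IsStrictlyPositive D →
      IsStrictlyPositive (opInvSqrt X * D * opInvSqrt X) := fun D hD ↦
    .conjugate_of_isUnit_of_isSelfAdjoint D _ hT.isUnit hT.isSelfAdjoint hD
  have key := cfc_strictMono f hf_cont hf_smono hf_opmono _ _ (hconj A hA) (hconj B hB)
    (by simpa [mul_sub, sub_mul] using hconj _ hAB)
  simpa [indMean, mul_sub, sub_mul] using
    IsStrictlyPositive.conjugate_of_isUnit_of_isSelfAdjoint _ _ hS.isUnit hS.isSelfAdjoint key
end

section
/- Let τ, σ : P × P → P be jointly monotone (A ≤ A′ and B ≤ B′ imply A τ B ≤ A′ τ B′, and likewise for σ) and positively homogeneous (τ(λA,λB) = λτ(A,B) and σ(λA,λB) = λσ(A,B) for λ > 0), and assume σ is strictly monotone in its second variable (X ∈ P and A < B imply XσA < XσB). Then for every A, B ∈ P, if X, Y ∈ P both satisfy X = (XσA)τ(XσB) and Y = (YσA)τ(YσB), then X = Y. -/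
/-!
Let `l` be the least real number `l ≥ 1` with `X ≤ l Y`; it exists because `Y` is bounded below by a
positive multiple of the identity and the order is norm-closed. If `l > 1`, then by homogeneity
`X σ A ≤ (l Y) σ A = l (Y σ (l⁻¹ A))`, and `l⁻¹ A < A`, so strict monotonicity of `σ` gives
`Y σ (l⁻¹ A) ≤ c (Y σ A)` for some `c < 1`; the same holds for `B`, with a common `c`.
Monotonicity and homogeneity of `τ` then give `X ≤ c l Y`, contradicting the choice of `l`. Hence `X ≤ Y`, and
`X = Y` by symmetry. The analytic input is `PosInv.exists_smul_le`: an element of `P` dominates a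
positive multiple of any given positive operator.
-/

open scoped ComplexOrder

variable {H : Type*} [NormedAddCommGroup H] [InnerProductSpace ℂ H] [CompleteSpace H]

/-- Since `D ≥ r` for some `r > 0` and `T ≤ ‖T‖`, the operator `D` dominates a positive multiple
of `T`. -/
lemma PosInv.exists_smul_le {D T : H →L[ℂ] H} (hD : PosInv D) (hT : 0 ≤ T) :
    ∃ ε : ℝ, 0 < ε ∧ ε • T ≤ D := by
  rcases subsingleton_or_nontrivial (H →L[ℂ] H) with _ | _
  · exact ⟨1, one_pos, (Subsingleton.elim _ _).le⟩
  have hs : IsStrictlyPositive D := hD.2.isStrictlyPositive hD.nonneg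
  obtain ⟨r, hr, hrD⟩ :=
    (CFC.exists_pos_algebraMap_le_iff hs.isSelfAdjoint).2 fun x hx => hs.spectrum_pos hx
  have hn : 0 < ‖T‖ + 1 := by positivity
  have hT1 : T ≤ (‖T‖ + 1) • (1 : H →L[ℂ] H) := by
    have h := IsSelfAdjoint.le_algebraMap_norm_self (IsSelfAdjoint.of_nonneg hT)
    rw [Algebra.algebraMap_eq_smul_one] at h
    exact h.trans (smul_le_smul_of_nonneg_right (by linarith) zero_le_one)
  refine ⟨r / (‖T‖ + 1), by positivity, ?_⟩
  calc (r / (‖T‖ + 1)) • T ≤ (r / (‖T‖ + 1)) • (‖T‖ + 1) • (1 : H →L[ℂ] H) :=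
        smul_le_smul_of_nonneg_left hT1 (by positivity)
    _ = algebraMap ℝ (H →L[ℂ] H) r := by
        rw [smul_smul, div_mul_cancel₀ _ hn.ne', Algebra.algebraMap_eq_smul_one]
    _ ≤ D := hrD

/-- Scaling `Y` by `l > 1` scales `Y σ A` by strictly less than `l`. Every sufficiently small `δ` is
allowed, so that one `δ` can serve for two operators `A`. -/
lemma exists_contraction (σ : (H →L[ℂ] H) → (H →L[ℂ] H) → (H →L[ℂ] H))
    (hσmaps : ∀ A B, PosInv A → PosInv B → PosInv (σ A B))
    (hσhomog : ∀ A B, PosInv A → PosInv B → ∀ l : ℝ, 0 < l → σ (l • A) (l • B) = l • σ A B)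
    (hσstrict : ∀ X A B, PosInv X → PosInv A → PosInv B → LoeLT A B → LoeLT (σ X A) (σ X B))
    {Y A : H →L[ℂ] H} (hY : PosInv Y) (hA : PosInv A) {l : ℝ} (hl : 1 < l) :
    ∃ ε : ℝ, 0 < ε ∧ ∀ δ ≤ ε, σ (l • Y) A ≤ ((1 - δ) * l) • σ Y A := by
  have hl0 : 0 < l := by linarith
  have hA' : PosInv (l⁻¹ • A) := hA.smul (inv_pos.2 hl0)
  have hlt : LoeLT (l⁻¹ • A) A := by
    have h : A - l⁻¹ • A = (1 - l⁻¹) • A := by rw [sub_smul, one_smul]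
    rw [LoeLT, h]
    exact hA.smul (sub_pos.2 (inv_lt_one_of_one_lt₀ hl))
  obtain ⟨ε, hε, hle⟩ :=
    (hσstrict Y _ _ hY hA' hA hlt).exists_smul_le (hσmaps Y A hY hA).nonneg
  refine ⟨ε, hε, fun δ hδ => ?_⟩
  have h1 : δ • σ Y A ≤ σ Y A - σ Y (l⁻¹ • A) :=
    (smul_le_smul_of_nonneg_right hδ (hσmaps Y A hY hA).nonneg).trans hle
  have h2 : σ Y (l⁻¹ • A) ≤ (1 - δ) • σ Y A := by
    rw [sub_smul, one_smul]
    exact le_sub_comm.1 h1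
  have h3 : σ (l • Y) A = l • σ Y (l⁻¹ • A) := by
    rw [← hσhomog Y _ hY hA' l hl0, smul_smul, mul_inv_cancel₀ hl0.ne', one_smul]
  rw [h3, mul_comm, mul_smul]
  exact smul_le_smul_of_nonneg_left h2 hl0.le

/-- One half of uniqueness, from which equality follows by exchanging the two solutions. -/
lemma fixed_point_le
    (τ σ : (H →L[ℂ] H) → (H →L[ℂ] H) → (H →L[ℂ] H))
    (hτmono : ∀ A A' B B', PosInv A → PosInv A' → PosInv B → PosInv B' →
      Loe A A' → Loe B B' → Loe (τ A B) (τ A' B'))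
    (hτhomog : ∀ A B, PosInv A → PosInv B → ∀ l : ℝ, 0 < l → τ (l • A) (l • B) = l • τ A B)
    (hσmaps : ∀ A B, PosInv A → PosInv B → PosInv (σ A B))
    (hσmono : ∀ A A' B B', PosInv A → PosInv A' → PosInv B → PosInv B' →
      Loe A A' → Loe B B' → Loe (σ A B) (σ A' B'))
    (hσhomog : ∀ A B, PosInv A → PosInv B → ∀ l : ℝ, 0 < l → σ (l • A) (l • B) = l • σ A B)
    (hσstrict : ∀ X A B, PosInv X → PosInv A → PosInv B → LoeLT A B → LoeLT (σ X A) (σ X B))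
    (A B : H →L[ℂ] H) (hA : PosInv A) (hB : PosInv B)
    (X Y : H →L[ℂ] H) (hX : PosInv X) (hY : PosInv Y)
    (hfX : X = τ (σ X A) (σ X B)) (hfY : Y = τ (σ Y A) (σ Y B)) :
    X ≤ Y := by
  have step : ∀ l : ℝ, 1 < l → X ≤ l • Y → ∃ c : ℝ, 0 < c ∧ c < 1 ∧ X ≤ (c * l) • Y := by
    intro l hl hXY
    have hl0 : 0 < l := by linarith
    obtain ⟨ε₁, hε₁, h₁⟩ := exists_contraction σ hσmaps hσhomog hσstrict hY hA hl
    obtain ⟨ε₂, hε₂, h₂⟩ := exists_contraction σ hσmaps hσhomog hσstrict hY hB hl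
    obtain ⟨δ, hδ0, hδ⟩ : ∃ δ : ℝ, 0 < δ ∧ δ < min (min ε₁ ε₂) 1 :=
      exists_between (by positivity)
    simp only [lt_min_iff] at hδ
    have hc : 0 < 1 - δ := by linarith
    have hcl : 0 < (1 - δ) * l := by positivity
    have bound : ∀ C, PosInv C → σ (l • Y) C ≤ ((1 - δ) * l) • σ Y C →
        Loe (σ X C) (((1 - δ) * l) • σ Y C) := fun C hC h =>
      le_trans (b := σ (l • Y) C) (hσmono _ _ _ _ hX (hY.smul hl0) hC hC hXY (le_refl C)) h
    refine ⟨1 - δ, hc, by linarith, ?_⟩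
    have key := hτmono _ _ _ _ (hσmaps X A hX hA) ((hσmaps Y A hY hA).smul hcl)
      (hσmaps X B hX hB) ((hσmaps Y B hY hB).smul hcl)
      (bound A hA (h₁ δ hδ.1.1.le)) (bound B hB (h₂ δ hδ.1.2.le))
    rw [hτhomog _ _ (hσmaps Y A hY hA) (hσmaps Y B hY hB) _ hcl, ← hfX, ← hfY] at key
    exact key
  let S : Set ℝ := {l | 1 ≤ l ∧ X ≤ l • Y}
  have hSclosed : IsClosed S := by
    have hc : IsClosed {l : ℝ | X ≤ l • Y} := isClosed_le (by fun_prop) (by fun_prop)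
    exact isClosed_Ici.inter hc
  have hSbdd : BddBelow S := ⟨1, fun l hl => hl.1⟩
  have hSne : S.Nonempty := by
    obtain ⟨ε, hε, hle⟩ := hY.exists_smul_le hX.nonneg
    refine ⟨max 1 ε⁻¹, le_max_left _ _, ?_⟩
    calc X = ε⁻¹ • ε • X := by rw [smul_smul, inv_mul_cancel₀ hε.ne', one_smul]
      _ ≤ ε⁻¹ • Y := smul_le_smul_of_nonneg_left hle (by positivity)
      _ ≤ max 1 ε⁻¹ • Y := smul_le_smul_of_nonneg_right (le_max_right _ _) hY.nonneg
  obtain ⟨h1, hXY⟩ : sInf S ∈ S := hSclosed.csInf_mem hSne hSbdd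
  rcases h1.eq_or_lt with h | h
  · rwa [← h, one_smul] at hXY
  · obtain ⟨c, hc0, hc1, hcX⟩ := step _ h hXY
    have hmem : max 1 (c * sInf S) ∈ S := ⟨le_max_left _ _,
      hcX.trans (smul_le_smul_of_nonneg_right (le_max_right _ _) hY.nonneg)⟩
    have hlt : max 1 (c * sInf S) < sInf S := max_lt h (by nlinarith)
    exact absurd (csInf_le hSbdd hmem) (not_le.2 hlt)

/-- If `τ, σ : P × P → P` are jointly monotone and positively homogeneous and `σ` is
strictly monotone in its second variable, then the fixed point equation
`X = (XσA)τ(XσB)` has at most one solution in `P`. -/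
theorem fixed_point_unique
    (τ σ : (H →L[ℂ] H) → (H →L[ℂ] H) → (H →L[ℂ] H))
    (hτmaps : ∀ A B, PosInv A → PosInv B → PosInv (τ A B))
    (hτmono : ∀ A A' B B', PosInv A → PosInv A' → PosInv B → PosInv B' →
      Loe A A' → Loe B B' → Loe (τ A B) (τ A' B'))
    (hτhomog : ∀ A B, PosInv A → PosInv B → ∀ l : ℝ, 0 < l → τ (l • A) (l • B) = l • τ A B)
    (hσmaps : ∀ A B, PosInv A → PosInv B → PosInv (σ A B))
    (hσmono : ∀ A A' B B', PosInv A → PosInv A' → PosInv B → PosInv B' →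
      Loe A A' → Loe B B' → Loe (σ A B) (σ A' B'))
    (hσhomog : ∀ A B, PosInv A → PosInv B → ∀ l : ℝ, 0 < l → σ (l • A) (l • B) = l • σ A B)
    (hσstrict : ∀ X A B, PosInv X → PosInv A → PosInv B → LoeLT A B → LoeLT (σ X A) (σ X B))
    (A B : H →L[ℂ] H) (hA : PosInv A) (hB : PosInv B)
    (X Y : H →L[ℂ] H) (hX : PosInv X) (hY : PosInv Y)
    (hfX : X = τ (σ X A) (σ X B)) (hfY : Y = τ (σ Y A) (σ Y B)) :
    X = Y := by
  exact le_antisymm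
    (fixed_point_le τ σ hτmono hτhomog hσmaps hσmono hσhomog hσstrict A B hA hB X Y hX hY
      hfX hfY)
    (fixed_point_le τ σ hτmono hτhomog hσmaps hσmono hσhomog hσstrict A B hA hB Y X hY hX
      hfY hfX)
end

section
/- Fix d ≥ 1, positive definite Hermitian d×d complex matrices A₁,…,Aₙ, and a probability weight w = (w₁,…,wₙ) (w_j ≥ 0, Σ_j w_j = 1). For each k ∈ ℕ let s_k ∈ (0,1] and let X_k be a positive definite Hermitian d×d matrix satisfying Σ_{j=1}^n w_j (X_k^{-1/2} A_j X_k^{-1/2})^{s_k} = I. If s_k → 0 and X_k → Y in norm with Y positive definite, then Σ_{j=1}^n w_j log(Y^{-1/2} A_j Y^{-1/2}) = 0, i.e., Y satisfies the Karcher equation characterizing the weighted Cartan (Karcher) mean G_w(A₁,…,Aₙ). -/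
/-!
The fixed-point equation and `∑ j, w j = 1` give
`∑ j, w j • (T^s - 1) / s = 0` for `T = X_k^{-1/2} A_j X_k^{-1/2}` and `s = s_k`.
The scalar functions `x ↦ (x^s - 1) / s` converge to `log`, uniformly on compact subsets of
`(0, ∞)`, as `s ↓ 0`. The continuous functional calculus is jointly continuous in the function
(for uniform convergence on compact subsets of `(0, ∞)`) and in the positive definite matrix
(`tendsto_cfc_of_posDef`). Applied with the constant function `x ↦ x^{-1/2}`, this gives
`X_k^{-1/2} → Y^{-1/2}`; applied with `(x^s - 1) / s → log`, it shows that the left-hand side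
converges to `∑ j, w j • log (Y^{-1/2} A_j Y^{-1/2})`, which is therefore `0`.
-/

open scoped ComplexOrder
open Filter

/-- The real power `T^s` of a matrix via the spectral functional calculus. -/
noncomputable def mPow {d : ℕ} (T : Matrix (Fin d) (Fin d) ℂ) (s : ℝ) :
    Matrix (Fin d) (Fin d) ℂ :=
  cfc (fun x : ℝ => x ^ s) T

/-- The logarithm of a matrix via the spectral functional calculus. -/
noncomputable def mLog {d : ℕ} (T : Matrix (Fin d) (Fin d) ℂ) :
    Matrix (Fin d) (Fin d) ℂ :=
  cfc Real.log T

/-- `T^{-1/2}` via the spectral functional calculus. -/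
noncomputable def mInvSqrt {d : ℕ} (T : Matrix (Fin d) (Fin d) ℂ) :
    Matrix (Fin d) (Fin d) ℂ :=
  cfc (fun x : ℝ => (Real.sqrt x)⁻¹) T

section Helpers

open scoped Topology MatrixOrder Matrix.Norms.L2Operator
open UniformOnFun

lemma spectrum_pos_of_posDef {d : ℕ} {T : Matrix (Fin d) (Fin d) ℂ} (hT : T.PosDef) :
    spectrum ℝ T ⊆ Set.Ioi 0 :=
  (StarOrderedRing.isStrictlyPositive_iff_spectrum_pos (R := ℝ) T hT.isHermitian).1
    hT.isStrictlyPositive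

/-- Joint continuity of the functional calculus on positive definite matrices. The topology of the
operator norm, through which it is proved, is definitionally the entrywise topology. -/
lemma tendsto_cfc_of_posDef {d : ℕ} {F : ℕ → ℝ → ℝ} {f : ℝ → ℝ}
    {T : ℕ → Matrix (Fin d) (Fin d) ℂ} {S : Matrix (Fin d) (Fin d) ℂ}
    (hF : ∀ k, ContinuousOn (F k) (Set.Ioi 0)) (hf : ContinuousOn f (Set.Ioi 0))
    (hFf : TendstoLocallyUniformlyOn F f atTop (Set.Ioi 0))
    (hT : ∀ k, (T k).PosDef) (hS : S.PosDef) (hTS : Tendsto T atTop (𝓝 S)) :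
    Tendsto (fun k => cfc (F k) (T k)) atTop (𝓝 (cfc f S)) := by
  have hmem : ∀ {R : Matrix (Fin d) (Fin d) ℂ}, R.PosDef →
      IsSelfAdjoint R ∧ Set.Ioi (0 : ℝ) ∈ 𝓝ˢ (spectrum ℝ R) := fun hR =>
    ⟨hR.isHermitian, isOpen_Ioi.mem_nhdsSet.2 (spectrum_pos_of_posDef hR)⟩
  have hcont := continuousOn_cfc_setProd_nhdsSet (𝕜 := ℝ) (A := Matrix (Fin d) (Fin d) ℂ)
    (p := IsSelfAdjoint) (s := Set.Ioi (0 : ℝ))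
  have hat := hcont.continuousWithinAt
    (x := (ofFun {t | IsCompact t ∧ t ⊆ Set.Ioi (0 : ℝ)} f, S)) ⟨hf, hmem hS⟩
  have hlim : Tendsto (fun k => (ofFun {t | IsCompact t ∧ t ⊆ Set.Ioi (0 : ℝ)} (F k), T k)) atTop
      (𝓝 (ofFun {t | IsCompact t ∧ t ⊆ Set.Ioi (0 : ℝ)} f, S)) := by
    refine Tendsto.prodMk_nhds ?_ hTS
    rw [UniformOnFun.tendsto_iff_tendstoUniformlyOn]
    rw [tendstoLocallyUniformlyOn_iff_forall_isCompact isOpen_Ioi] at hFf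
    exact fun t ht => hFf t ht.2 ht.1
  exact hat.tendsto.comp (tendsto_nhdsWithin_iff.2
    ⟨hlim, Eventually.of_forall fun k => ⟨hF k, hmem (hT k)⟩⟩)

lemma posDef_mInvSqrt {d : ℕ} {T : Matrix (Fin d) (Fin d) ℂ} (hT : T.PosDef) :
    (mInvSqrt T).PosDef := by
  refine Matrix.isStrictlyPositive_iff_posDef.1 ((cfc_isStrictlyPositive_iff _ T
    (T.finite_real_spectrum.continuousOn _) hT.isHermitian).2 fun x hx => ?_)
  exact inv_pos.2 (Real.sqrt_pos.2 (spectrum_pos_of_posDef hT hx))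

lemma posDef_conj_mInvSqrt {d : ℕ} {T A : Matrix (Fin d) (Fin d) ℂ} (hT : T.PosDef)
    (hA : A.PosDef) : (mInvSqrt T * A * mInvSqrt T).PosDef := by
  have h := posDef_mInvSqrt hT
  exact Matrix.isStrictlyPositive_iff_posDef.1
    (IsStrictlyPositive.conjugate_of_isUnit_of_isSelfAdjoint A _ h.isUnit h.isHermitian
      hA.isStrictlyPositive)

lemma tendsto_mInvSqrt {d : ℕ} {X : ℕ → Matrix (Fin d) (Fin d) ℂ}
    {Y : Matrix (Fin d) (Fin d) ℂ} (hX : ∀ k, (X k).PosDef) (hY : Y.PosDef)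
    (hXY : Tendsto X atTop (𝓝 Y)) :
    Tendsto (fun k => mInvSqrt (X k)) atTop (𝓝 (mInvSqrt Y)) := by
  have hc : ContinuousOn (fun x : ℝ => (Real.sqrt x)⁻¹) (Set.Ioi 0) :=
    Real.continuous_sqrt.continuousOn.inv₀ fun x hx => (Real.sqrt_pos.2 hx).ne'
  refine tendsto_cfc_of_posDef (fun _ => hc) hc ?_ hX hY hXY
  intro u hu x _
  exact ⟨Set.univ, univ_mem, Eventually.of_forall fun _ _ _ => refl_mem_uniformity hu⟩

lemma cfc_rpow_sub_one {d : ℕ} {T : Matrix (Fin d) (Fin d) ℂ} (hT : T.PosDef) (p : ℝ) :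
    cfc (fun x : ℝ => p⁻¹ * (x ^ p - 1)) T = p⁻¹ • (mPow T p - 1) := by
  have hc (g : ℝ → ℝ) : ContinuousOn g (spectrum ℝ T) := T.finite_real_spectrum.continuousOn _
  have hsa : IsSelfAdjoint T := hT.isHermitian
  rw [cfc_const_mul _ _ T (hc _), cfc_sub _ _ T (hc _) (hc _), cfc_const_one ℝ T hsa, mPow]

end Helpers

/-- If positive definite `X_k` satisfy the fixed-point equations
`∑ j, w_j (X_k^{-1/2} A_j X_k^{-1/2})^{s_k} = I` with `s_k → 0` and `X_k → Y`
with `Y` positive definite, then `Y` satisfies the Karcher equation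
`∑ j, w_j log (Y^{-1/2} A_j Y^{-1/2}) = 0`. -/
theorem karcher_limit_of_power_fixed_points
    {d n : ℕ} (hd : 1 ≤ d)
    (A : Fin n → Matrix (Fin d) (Fin d) ℂ) (hA : ∀ j, (A j).PosDef)
    (w : Fin n → ℝ) (hw0 : ∀ j, 0 ≤ w j) (hw1 : ∑ j, w j = 1)
    (s : ℕ → ℝ) (hs : ∀ k, s k ∈ Set.Ioc (0 : ℝ) 1)
    (X : ℕ → Matrix (Fin d) (Fin d) ℂ) (hX : ∀ k, (X k).PosDef)
    (hfix : ∀ k, ∑ j, w j • mPow (mInvSqrt (X k) * A j * mInvSqrt (X k)) (s k) = 1)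
    (hs0 : Tendsto s atTop (nhds 0))
    (Y : Matrix (Fin d) (Fin d) ℂ) (hY : Y.PosDef)
    (hXY : Tendsto X atTop (nhds Y)) :
    ∑ j, w j • mLog (mInvSqrt Y * A j * mInvSqrt Y) = 0 := by
  have hpos : ∀ k j, (mInvSqrt (X k) * A j * mInvSqrt (X k)).PosDef :=
    fun k j => posDef_conj_mInvSqrt (hX k) (hA j)
  have hconv : ∀ j, Tendsto (fun k => mInvSqrt (X k) * A j * mInvSqrt (X k)) atTop
      (nhds (mInvSqrt Y * A j * mInvSqrt Y)) := fun j =>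
    ((tendsto_mInvSqrt hX hY hXY).mul_const (A j)).mul (tendsto_mInvSqrt hX hY hXY)
  have hs0' : Tendsto s atTop (nhdsWithin 0 (Set.Ioi 0)) :=
    tendsto_nhdsWithin_iff.2 ⟨hs0, Eventually.of_forall fun k => (hs k).1⟩
  have hunif : TendstoLocallyUniformlyOn (fun k (x : ℝ) => (s k)⁻¹ * (x ^ s k - 1)) Real.log
      atTop (Set.Ioi 0) := by
    intro u hu x hx
    obtain ⟨t, ht, h⟩ := Real.tendstoLocallyUniformlyOn_rpow_sub_one_log u hu x hx
    exact ⟨t, ht, hs0'.eventually h⟩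
  have hlim : Tendsto (fun k => ∑ j, w j • cfc (fun x : ℝ => (s k)⁻¹ * (x ^ s k - 1))
      (mInvSqrt (X k) * A j * mInvSqrt (X k))) atTop
      (nhds (∑ j, w j • mLog (mInvSqrt Y * A j * mInvSqrt Y))) := by
    refine tendsto_finsetSum _ fun j _ => Tendsto.const_smul ?_ (w j)
    refine tendsto_cfc_of_posDef (fun k => ?_) ?_ hunif (fun k => hpos k j)
      (posDef_conj_mInvSqrt hY (hA j)) (hconv j)
    · exact continuousOn_const.mul ((continuousOn_id.rpow_const
        fun x hx => Or.inl (ne_of_gt hx)).sub continuousOn_const)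
    · exact Real.continuousOn_log.mono fun x hx => ne_of_gt hx
  have hzero : ∀ k, ∑ j, w j • cfc (fun x : ℝ => (s k)⁻¹ * (x ^ s k - 1))
      (mInvSqrt (X k) * A j * mInvSqrt (X k)) = 0 := by
    intro k
    simp_rw [cfc_rpow_sub_one (hpos k _), smul_comm (w _) (s k)⁻¹]
    rw [← Finset.smul_sum]
    simp_rw [smul_sub]
    rw [Finset.sum_sub_distrib, hfix k, ← Finset.sum_smul, hw1, one_smul, sub_self, smul_zero]
  simp_rw [hzero] at hlim
  exact (tendsto_nhds_unique hlim tendsto_const_nhds)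
end

section
/- Let f_τ, f_σ : (0,∞) → (0,∞) be continuous and nondecreasing with f_τ(1) = f_σ(1) = 1, such that u ↦ f_τ(u)/u and u ↦ f_σ(u)/u are nonincreasing on (0,∞), and f_σ is strictly increasing. Then for every t > 0 there exists a unique x > 0 satisfying f_σ(1/x)·f_τ(f_σ(t/x)/f_σ(1/x)) = 1. -/
/-!
Write `a τ b = a * fτ (b / a)` for the two-variable mean represented by `fτ`. It is positively
homogeneous, and nondecreasing in `b` because `fτ` is, and in `a` because `fτ u / u` is
nonincreasing (`mean_mono`). Homogeneity upgrades this to strict monotonicity when both arguments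
strictly increase (`mean_strictMono`). The equation reads `fσ (1 / x) τ fσ (t / x) = 1`; as `fσ` is
strictly increasing, the left side is strictly decreasing in `x`, which gives uniqueness. Since
`1 τ 1 = 1`, the left side is at least `1` at `x = min 1 t` and at most `1` at `x = max 1 t`, so
the intermediate value theorem gives existence.
-/

theorem mean_mono {f : ℝ → ℝ} (hmono : MonotoneOn f (Set.Ioi 0))
    (hdiv : AntitoneOn (fun u => f u / u) (Set.Ioi 0))
    {a c b d : ℝ} (ha : 0 < a) (hb : 0 < b) (haa : a ≤ c) (hbb : b ≤ d) :
    a * f (b / a) ≤ c * f (d / c) := by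
  have hc : 0 < c := ha.trans_le haa
  have hd : 0 < d := hb.trans_le hbb
  have h1 : f (b / a) ≤ f (d / a) :=
    hmono (div_pos hb ha) (div_pos hd ha) (by gcongr)
  have h2 : f (d / a) / (d / a) ≤ f (d / c) / (d / c) :=
    hdiv (div_pos hd hc) (div_pos hd ha) (by gcongr)
  calc a * f (b / a) ≤ a * f (d / a) := by gcongr
    _ = d * (f (d / a) / (d / a)) := by field_simp
    _ ≤ d * (f (d / c) / (d / c)) := by gcongr
    _ = c * f (d / c) := by field_simp

theorem mean_strictMono {f : ℝ → ℝ} (hpos : ∀ x : ℝ, 0 < x → 0 < f x)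
    (hmono : MonotoneOn f (Set.Ioi 0))
    (hdiv : AntitoneOn (fun u => f u / u) (Set.Ioi 0))
    {a c b d : ℝ} (ha : 0 < a) (hb : 0 < b) (haa : a < c) (hbb : b < d) :
    a * f (b / a) < c * f (d / c) := by
  -- Scaling both arguments by `k > 1` keeps them below `c` and `d`.
  obtain ⟨k, hk, hka, hkb⟩ : ∃ k : ℝ, 1 < k ∧ k * a ≤ c ∧ k * b ≤ d := by
    refine ⟨min (c / a) (d / b), lt_min ((one_lt_div ha).2 haa) ((one_lt_div hb).2 hbb), ?_, ?_⟩
    · exact (le_div_iff₀ ha).1 (min_le_left _ _)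
    · exact (le_div_iff₀ hb).1 (min_le_right _ _)
  have hk0 : 0 < k := by linarith
  have hp : 0 < a * f (b / a) := mul_pos ha (hpos _ (div_pos hb ha))
  calc a * f (b / a) < k * (a * f (b / a)) := lt_mul_of_one_lt_left hp hk
    _ = (k * a) * f ((k * b) / (k * a)) := by
      rw [mul_div_mul_left _ _ hk0.ne', mul_assoc]
    _ ≤ c * f (d / c) := mean_mono hmono hdiv (mul_pos hk0 ha) (mul_pos hk0 hb) hka hkb

/-- Scalar form of the fixed point equation: if `f_τ, f_σ : (0,∞) → (0,∞)` are
continuous, nondecreasing, take the value `1` at `1`, have `u ↦ f(u)/u`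
nonincreasing, and `f_σ` is strictly increasing, then for every `t > 0` the
equation `f_σ(1/x)·f_τ(f_σ(t/x)/f_σ(1/x)) = 1` has a unique positive solution. -/
theorem scalar_fixed_point_existsUnique
    (fτ fσ : ℝ → ℝ)
    (hτpos : ∀ x : ℝ, 0 < x → 0 < fτ x) (hσpos : ∀ x : ℝ, 0 < x → 0 < fσ x)
    (hτcont : ContinuousOn fτ (Set.Ioi 0)) (hσcont : ContinuousOn fσ (Set.Ioi 0))
    (hτmono : MonotoneOn fτ (Set.Ioi 0)) (hσmono : MonotoneOn fσ (Set.Ioi 0))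
    (hτ1 : fτ 1 = 1) (hσ1 : fσ 1 = 1)
    (hτdiv : AntitoneOn (fun u => fτ u / u) (Set.Ioi 0))
    (hσdiv : AntitoneOn (fun u => fσ u / u) (Set.Ioi 0))
    (hσsmono : StrictMonoOn fσ (Set.Ioi 0))
    (t : ℝ) (ht : 0 < t) :
    ∃! x : ℝ, 0 < x ∧ fσ (1 / x) * fτ (fσ (t / x) / fσ (1 / x)) = 1 := by
  have hanti : ∀ x y : ℝ, 0 < x → x < y →
      fσ (1 / y) * fτ (fσ (t / y) / fσ (1 / y)) < fσ (1 / x) * fτ (fσ (t / x) / fσ (1 / x)) := by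
    intro x y hx hxy
    have hy : 0 < y := hx.trans hxy
    apply mean_strictMono hτpos hτmono hτdiv (hσpos _ (by positivity)) (hσpos _ (by positivity))
    · exact hσsmono (div_pos one_pos hy) (div_pos one_pos hx) (by gcongr)
    · exact hσsmono (div_pos ht hy) (div_pos ht hx) (by gcongr)
  have hm : 0 < min 1 t := lt_min one_pos ht
  have hM : 0 < max 1 t := lt_max_of_lt_left one_pos
  have hlow : 1 ≤ fσ (1 / min 1 t) * fτ (fσ (t / min 1 t) / fσ (1 / min 1 t)) := by
    have h1 : 1 ≤ fσ (1 / min 1 t) := hσ1.symm.trans_le (hσmono (Set.mem_Ioi.2 one_pos) (div_pos one_pos hm)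
      ((one_le_div hm).2 (min_le_left _ _)))
    have h2 : 1 ≤ fσ (t / min 1 t) := hσ1.symm.trans_le (hσmono (Set.mem_Ioi.2 one_pos) (div_pos ht hm)
      ((one_le_div hm).2 (min_le_right _ _)))
    simpa [hτ1] using mean_mono hτmono hτdiv one_pos one_pos h1 h2
  have hhigh : fσ (1 / max 1 t) * fτ (fσ (t / max 1 t) / fσ (1 / max 1 t)) ≤ 1 := by
    have h1 : fσ (1 / max 1 t) ≤ 1 := (hσmono (div_pos one_pos hM) (Set.mem_Ioi.2 one_pos)
      ((div_le_one hM).2 (le_max_left _ _))).trans_eq hσ1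
    have h2 : fσ (t / max 1 t) ≤ 1 := (hσmono (div_pos ht hM) (Set.mem_Ioi.2 one_pos)
      ((div_le_one hM).2 (le_max_right _ _))).trans_eq hσ1
    simpa [hτ1] using mean_mono hτmono hτdiv (hσpos _ (div_pos one_pos hM))
      (hσpos _ (div_pos ht hM)) h1 h2
  have hcomp : ∀ c : ℝ, 0 < c → ContinuousOn (fun x => fσ (c / x)) (Set.Ioi 0) := fun c hc =>
    hσcont.comp (continuousOn_const.div continuousOn_id fun x hx => (Set.mem_Ioi.1 hx).ne')
      fun x hx => div_pos hc hx
  have hcont : ContinuousOn (fun x => fσ (1 / x) * fτ (fσ (t / x) / fσ (1 / x))) (Set.Ioi 0) :=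
    (hcomp 1 one_pos).mul <| hτcont.comp
      ((hcomp t ht).div (hcomp 1 one_pos) fun x hx => (hσpos _ (div_pos one_pos hx)).ne')
      fun x hx => div_pos (hσpos _ (div_pos ht hx)) (hσpos _ (div_pos one_pos hx))
  obtain ⟨x, hx, hx1⟩ := intermediate_value_Icc' (min_le_max (a := (1 : ℝ)) (b := t))
    (hcont.mono fun x hx => hm.trans_le hx.1) ⟨hhigh, hlow⟩
  have hx0 : 0 < x := hm.trans_le hx.1
  refine ⟨x, ⟨hx0, hx1⟩, ?_⟩
  rintro y ⟨hy0, hy1⟩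
  rcases lt_trichotomy y x with h | h | h
  · exact absurd (hx1.trans hy1.symm) (hanti y x hy0 h).ne
  · exact h
  · exact absurd (hy1.trans hx1.symm) (hanti x y hx0 h).ne
end

section
/- Let f : (0,∞) → (0,∞) be continuous and strictly increasing with f(1) = 1 and u ↦ f(u)/u nonincreasing on (0,∞). Then the following are equivalent: (a) for every t > 0, x = √t is the unique positive solution of x·f(1/x) = f(t/x); (b) f(t) = t·f(1/t) for all t > 0. -/
/-- For `f : (0,∞) → (0,∞)` continuous, strictly increasing with `f(1) = 1` and
`u ↦ f(u)/u` nonincreasing, the following are equivalent: (a) for every `t > 0`,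
`x = √t` is the unique positive solution of `x·f(1/x) = f(t/x)`; (b)
`f(t) = t·f(1/t)` for all `t > 0` (symmetry of the associated mean). -/
theorem sqrt_unique_solution_iff_symmetric
    (f : ℝ → ℝ)
    (hpos : ∀ x : ℝ, 0 < x → 0 < f x)
    (hcont : ContinuousOn f (Set.Ioi 0))
    (hsmono : StrictMonoOn f (Set.Ioi 0))
    (h1 : f 1 = 1)
    (hdiv : AntitoneOn (fun u => f u / u) (Set.Ioi 0)) :
    (∀ t : ℝ, 0 < t →
        Real.sqrt t * f (1 / Real.sqrt t) = f (t / Real.sqrt t) ∧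
        (∀ x : ℝ, 0 < x → x * f (1 / x) = f (t / x) → x = Real.sqrt t)) ↔
      (∀ t : ℝ, 0 < t → f t = t * f (1 / t)) := by
  constructor
  · intro h t ht
    -- At `t ^ 2` the asserted solution is `t` itself, which gives symmetry at `t`.
    have h2 := (h (t ^ 2) (by positivity)).1
    rw [Real.sqrt_sq ht.le, sq, mul_div_cancel_right₀ _ ht.ne'] at h2
    exact h2.symm
  · intro h t ht
    have hs : 0 < Real.sqrt t := Real.sqrt_pos.2 ht
    refine ⟨?_, fun x hx hxe => ?_⟩
    · rw [Real.div_sqrt]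
      exact (h _ hs).symm
    · -- By symmetry the equation reads `f x = f (t / x)`, and `f` is injective.
      rw [← h x hx] at hxe
      have hxt : x = t / x := hsmono.injOn hx (div_pos ht hx) hxe
      rw [eq_div_iff hx.ne'] at hxt
      rw [← hxt, Real.sqrt_mul_self hx.le]
end

section
/- Let f_τ, f_σ, g : (0,∞) → (0,∞) satisfy f_τ(1) = f_σ(1) = g(1) = 1, with f_τ, f_σ and g differentiable at 1 and f_σ′(1) > 0. If f_σ(1/g(t))·f_τ(f_σ(t/g(t))/f_σ(1/g(t))) = 1 for all t in some neighborhood of 1, then g′(1) = f_τ′(1). -/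
/-!
Differentiate the defining identity at `t = 1`, where every inner argument equals `1`. The factor
`fσ (1 / g t)` has derivative `-aσ * ag`, the factor `fσ (t / g t)` has derivative `aσ * (1 - ag)`,
so their quotient has derivative `aσ`. Since the left-hand side is constant near `1`, this gives
`-aσ * ag + aτ * aσ = 0`, and `aσ ≠ 0` can be cancelled.
-/

/-- Deformation preserves the derivative at `1`: if `f_τ(1) = f_σ(1) = g(1) = 1`,
all are differentiable at `1`, `f_σ'(1) > 0`, and
`f_σ(1/g(t))·f_τ(f_σ(t/g(t))/f_σ(1/g(t))) = 1` for all `t` near `1`, then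
`g'(1) = f_τ'(1)`. -/
theorem deformation_preserves_derivative_at_one
    (fτ fσ g : ℝ → ℝ) (aτ aσ ag : ℝ)
    (hτ1 : fτ 1 = 1) (hσ1 : fσ 1 = 1) (hg1 : g 1 = 1)
    (hτd : HasDerivAt fτ aτ 1) (hσd : HasDerivAt fσ aσ 1) (hgd : HasDerivAt g ag 1)
    (hσpos : 0 < aσ)
    (heq : ∀ᶠ t in nhds 1, fσ (1 / g t) * fτ (fσ (t / g t) / fσ (1 / g t)) = 1) :
    ag = aτ := by
  have h_inv : HasDerivAt (fun t => 1 / g t) (-ag) 1 := by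
    simpa [hg1] using (hasDerivAt_const (1 : ℝ) (1 : ℝ)).fun_div hgd (by simp [hg1])
  have h_div : HasDerivAt (fun t => t / g t) (1 - ag) 1 := by
    simpa [hg1] using (hasDerivAt_id' (1 : ℝ)).fun_div hgd (by simp [hg1])
  have h_left : HasDerivAt (fun t => fσ (1 / g t)) (aσ * -ag) 1 :=
    HasDerivAt.comp_of_eq (h₂ := fσ) (h := fun t => 1 / g t) 1 hσd h_inv (by simp [hg1])
  have h_right : HasDerivAt (fun t => fσ (t / g t)) (aσ * (1 - ag)) 1 :=
    HasDerivAt.comp_of_eq (h₂ := fσ) (h := fun t => t / g t) 1 hσd h_div (by simp [hg1])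
  have h_quot : HasDerivAt (fun t => fσ (t / g t) / fσ (1 / g t)) aσ 1 := by
    refine (h_right.fun_div h_left (by simp [hg1, hσ1])).congr_deriv ?_
    simp only [hg1, hσ1, div_one]
    ring
  have h_outer : HasDerivAt (fun t => fτ (fσ (t / g t) / fσ (1 / g t))) (aτ * aσ) 1 :=
    HasDerivAt.comp_of_eq (h₂ := fτ) (h := fun t => fσ (t / g t) / fσ (1 / g t)) 1 hτd h_quot
      (by simp [hg1, hσ1])
  have h_zero := (h_left.fun_mul h_outer).unique
    ((hasDerivAt_const (1 : ℝ) (1 : ℝ)).congr_of_eventuallyEq heq)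
  simp only [hg1, hσ1, hτ1, div_one, mul_one, one_mul] at h_zero
  refine mul_left_cancel₀ hσpos.ne' ?_
  linarith
end

section
/- Let f : (0,∞) → (0,∞) with f(1) = 1 be differentiable at 1 with α := f′(1) ∈ [0,1]. Fix t > 0, δ ∈ (0,1), and r ∈ [−1,1] with r ≠ 0. For s ∈ (0,1] and ρ ∈ [−1,1] \ {0}, put f_{s,ρ}(u) := (1 − s + s·u^ρ)^{1/ρ}. Let s_k ∈ (0,1] with s_k → 0, let r_k ∈ [−1,1] \ {0} with r_k → r, and let x_k ∈ [δ, 1/δ] satisfy f_{s_k,r_k}(1/x_k)·f(f_{s_k,r_k}(t/x_k)/f_{s_k,r_k}(1/x_k)) = 1 for every k. Then x_k → (1 − α + α·t^r)^{1/r} as k → ∞. -/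
/-!
Write `a = (1/x)^ρ` and `b = (t/x)^ρ = t^ρ * a` for `ρ = rk k`, and take logarithms of the equation.
With `A = log (1 + s (a - 1)) / ρ`, `B = log (1 + s (b - 1)) / ρ` and `g y = log (f (exp y))` it reads
`A + g (B - A) = 0`. Here `g 0 = 0` and `g'(0) = α`. Replacing `log` and `g` by their difference
quotients (`dslope`) at `1` and `0`, which are continuous there, and dividing by `s / ρ`, the equation
becomes *linear* in `a`:
`a * (D (1 - G) + t^ρ * E * G) = D (1 - G) + E * G` with `D, E → 1` and `G → α`.
Hence `a → 1 / (1 - α + α t^r)`, and `x = (1/a)^(1/ρ)` gives the limit of `x`. No compactness argument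
is needed: the bounds on `x` serve only to ensure `s * a → 0`.
-/

open Filter

/-- The representing function `f_{s,ρ}(u) = (1 - s + s·u^ρ)^{1/ρ}` of the weighted
power mean `𝔭_{s,ρ}`. -/
noncomputable def powerMeanFn (s ρ u : ℝ) : ℝ := (1 - s + s * u ^ ρ) ^ (1 / ρ)

lemma log_eq_dslope (y : ℝ) : Real.log y = (y - 1) * dslope Real.log 1 y := by
  have := sub_smul_dslope Real.log 1 y
  simp only [smul_eq_mul, Real.log_one, sub_zero] at this
  exact this.symm

/-- The logarithm's difference quotient along a sequence tending to `1`. -/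
lemma tendsto_dslope_log {c : ℕ → ℝ} (hc : Tendsto c atTop (nhds 1)) :
    Tendsto (fun k => dslope Real.log 1 (c k)) atTop (nhds 1) := by
  have h1 : HasDerivAt Real.log 1 1 := by simpa using Real.hasDerivAt_log (one_ne_zero (α := ℝ))
  have h2 : ContinuousAt (dslope Real.log 1) 1 := continuousAt_dslope_same.2 h1.differentiableAt
  have h3 := h2.tendsto.comp hc
  rwa [dslope_same, h1.deriv] at h3

lemma powerMeanFn_eq_exp {s ρ u : ℝ} (h : 0 < 1 - s + s * u ^ ρ) :
    powerMeanFn s ρ u = Real.exp (Real.log (1 - s + s * u ^ ρ) / ρ) := by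
  rw [powerMeanFn, Real.rpow_def_of_pos h, mul_one_div]

/-- `g y = log (f (exp y))` has derivative `α` at `0`. -/
lemma hasDerivAt_log_comp_exp {f : ℝ → ℝ} {α : ℝ} (hf1 : f 1 = 1) (hderiv : HasDerivAt f α 1) :
    HasDerivAt (fun y => Real.log (f (Real.exp y))) α 0 := by
  have h1 : HasDerivAt (fun y => f (Real.exp y)) (α * Real.exp 0) 0 :=
    HasDerivAt.comp (h₂ := f) (0 : ℝ) (by simpa using hderiv) (Real.hasDerivAt_exp 0)
  have h2 := h1.log (by simp [hf1])
  simpa [hf1] using h2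

/-- Boundary limit of the two-parameter deformation (`r ≠ 0` case): if `s_k → 0`,
`r_k → r ≠ 0`, and `x_k ∈ [δ, 1/δ]` solve the deformed equations for `𝔭_{s_k,r_k}`
at `t`, then `x_k → (1 - α + α·t^r)^{1/r}` where `α = f'(1)`. -/
theorem deformed_power_mean_boundary_limit
    (f : ℝ → ℝ) (hfpos : ∀ x : ℝ, 0 < x → 0 < f x) (hf1 : f 1 = 1)
    (α : ℝ) (hderiv : HasDerivAt f α 1) (hα0 : 0 ≤ α) (hα1 : α ≤ 1)
    (t δ r : ℝ) (ht : 0 < t) (hδ0 : 0 < δ) (hδ1 : δ < 1)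
    (hr : r ∈ Set.Icc (-1 : ℝ) 1) (hr0 : r ≠ 0)
    (s : ℕ → ℝ) (hs : ∀ k, s k ∈ Set.Ioc (0 : ℝ) 1) (hs0 : Tendsto s atTop (nhds 0))
    (rk : ℕ → ℝ) (hrk : ∀ k, rk k ∈ Set.Icc (-1 : ℝ) 1) (hrk0 : ∀ k, rk k ≠ 0)
    (hrconv : Tendsto rk atTop (nhds r))
    (x : ℕ → ℝ) (hx : ∀ k, x k ∈ Set.Icc δ δ⁻¹)
    (heq : ∀ k, powerMeanFn (s k) (rk k) (1 / x k) *
      f (powerMeanFn (s k) (rk k) (t / x k) / powerMeanFn (s k) (rk k) (1 / x k)) = 1) :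
    Tendsto x atTop (nhds ((1 - α + α * t ^ r) ^ (1 / r))) := by
  set a : ℕ → ℝ := fun k => (1 / x k) ^ rk k with ha
  set p : ℕ → ℝ := fun k => 1 - s k + s k * a k with hp
  set q : ℕ → ℝ := fun k => 1 - s k + s k * (t ^ rk k * a k) with hq
  have hxpos : ∀ k, 0 < x k := fun k => hδ0.trans_le (hx k).1
  have hapos : ∀ k, 0 < a k := fun k => Real.rpow_pos_of_pos (one_div_pos.2 (hxpos k)) _
  have hb : ∀ k, (t / x k) ^ rk k = t ^ rk k * a k := fun k => by
    rw [ha, ← Real.mul_rpow ht.le (one_div_pos.2 (hxpos k)).le, mul_one_div]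
  have htpow : ∀ k, 0 < t ^ rk k := fun k => Real.rpow_pos_of_pos ht _
  have hppos : ∀ k, 0 < p k := fun k => by
    have := mul_pos (hs k).1 (hapos k)
    have := (hs k).2
    simp only [hp]; linarith
  have hqpos : ∀ k, 0 < q k := fun k => by
    have := mul_pos (hs k).1 (mul_pos (htpow k) (hapos k))
    have := (hs k).2
    simp only [hq]; linarith
  have habound : ∀ k, a k ≤ Real.exp (-Real.log δ) := fun k => by
    simp only [ha]
    rw [Real.rpow_def_of_pos (one_div_pos.2 (hxpos k)), Real.exp_le_exp, one_div, Real.log_inv]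
    have h1 : Real.log δ ≤ Real.log (x k) := Real.log_le_log hδ0 (hx k).1
    have h2 : Real.log (x k) ≤ -Real.log δ := by
      rw [← Real.log_inv]; exact Real.log_le_log (hxpos k) (hx k).2
    have h3 : |Real.log (x k)| ≤ -Real.log δ := abs_le.2 ⟨by linarith, h2⟩
    have h4 : |rk k| ≤ 1 := abs_le.2 (hrk k)
    calc -Real.log (x k) * rk k ≤ |(-Real.log (x k)) * rk k| := le_abs_self _
      _ = |Real.log (x k)| * |rk k| := by rw [abs_mul, abs_neg]
      _ ≤ |Real.log (x k)| * 1 := by gcongr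
      _ ≤ -Real.log δ := by linarith
  have hsa : Tendsto (fun k => s k * a k) atTop (nhds 0) := by
    refine squeeze_zero (fun k => (mul_pos (hs k).1 (hapos k)).le)
      (fun k => mul_le_mul_of_nonneg_left (habound k) (hs k).1.le) ?_
    simpa using hs0.mul_const (Real.exp (-Real.log δ))
  have htlim : Tendsto (fun k => t ^ rk k) atTop (nhds (t ^ r)) :=
    tendsto_const_nhds.rpow hrconv (Or.inl ht.ne')
  have hplim : Tendsto p atTop (nhds 1) := by
    simpa using (hs0.const_sub 1).add hsa
  have hqlim : Tendsto q atTop (nhds 1) := by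
    have := (hs0.const_sub 1).add (htlim.mul hsa)
    simp only [mul_zero, sub_zero, add_zero] at this
    refine this.congr fun k => ?_
    simp only [hq]; ring
  set D : ℕ → ℝ := fun k => dslope Real.log 1 (p k) with hD
  set E : ℕ → ℝ := fun k => dslope Real.log 1 (q k) with hE
  have hDlim : Tendsto D atTop (nhds 1) := tendsto_dslope_log hplim
  have hElim : Tendsto E atTop (nhds 1) := tendsto_dslope_log hqlim
  set g : ℝ → ℝ := fun y => Real.log (f (Real.exp y)) with hg
  have hgd : HasDerivAt g α 0 := hasDerivAt_log_comp_exp hf1 hderiv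
  set y : ℕ → ℝ := fun k => Real.log (q k) / rk k - Real.log (p k) / rk k with hy
  have hylim : Tendsto y atTop (nhds 0) := by
    have h1 := ((hqlim.log one_ne_zero).div hrconv hr0).sub
      ((hplim.log one_ne_zero).div hrconv hr0)
    simpa using h1
  set G : ℕ → ℝ := fun k => dslope g 0 (y k) with hG
  have hGlim : Tendsto G atTop (nhds α) := by
    have h2 : ContinuousAt (dslope g 0) 0 := continuousAt_dslope_same.2 hgd.differentiableAt
    have h3 := h2.tendsto.comp hylim
    rwa [dslope_same, hgd.deriv] at h3
  have hlog : ∀ k, Real.log (p k) / rk k + y k * G k = 0 := fun k => by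
    have hgy : g (y k) = y k * G k := by
      have := sub_smul_dslope g 0 (y k)
      simp only [smul_eq_mul, sub_zero] at this
      rw [hG, this]; simp [hg, hf1]
    have h1 : powerMeanFn (s k) (rk k) (1 / x k) = Real.exp (Real.log (p k) / rk k) :=
      powerMeanFn_eq_exp (hppos k)
    have h2 : powerMeanFn (s k) (rk k) (t / x k) = Real.exp (Real.log (q k) / rk k) := by
      have h := hqpos k
      simp only [hq, ← hb] at h ⊢
      exact powerMeanFn_eq_exp h
    have h3 := heq k
    rw [h1, h2, ← Real.exp_sub] at h3
    have h4 := congrArg Real.log h3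
    rw [Real.log_mul (Real.exp_pos _).ne' (hfpos _ (Real.exp_pos _)).ne', Real.log_exp,
      Real.log_one] at h4
    rw [← hgy]
    exact h4
  -- After division by `s k / rk k` the equation is linear in `a k`.
  have hlin : ∀ k, a k * (D k * (1 - G k) + t ^ rk k * E k * G k)
      = D k * (1 - G k) + E k * G k := fun k => by
    have h1 : Real.log (p k) = s k * (a k - 1) * D k := by
      rw [log_eq_dslope (p k)]; simp only [hD, hp]; ring
    have h2 : Real.log (q k) = s k * (t ^ rk k * a k - 1) * E k := by
      rw [log_eq_dslope (q k)]; simp only [hE, hq]; ring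
    have h3 := hlog k
    simp only [hy, h1, h2] at h3
    have h4 : s k / rk k ≠ 0 := div_ne_zero (hs k).1.ne' (hrk0 k)
    have h5 : s k / rk k * (a k * (D k * (1 - G k) + t ^ rk k * E k * G k)
        - (D k * (1 - G k) + E k * G k)) = 0 := by
      rw [← h3]; ring
    exact sub_eq_zero.1 ((mul_eq_zero.1 h5).resolve_left h4)
  set m : ℝ := 1 - α + α * t ^ r with hm
  have hmpos : 0 < m := by
    have htr : 0 < t ^ r := Real.rpow_pos_of_pos ht r
    rcases hα0.eq_or_lt with h | h
    · simp [hm, ← h]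
    · have := mul_pos h htr
      simp only [hm]; linarith
  have hnum : Tendsto (fun k => D k * (1 - G k) + t ^ rk k * E k * G k) atTop (nhds m) := by
    have h := (hDlim.mul (hGlim.const_sub 1)).add ((htlim.mul hElim).mul hGlim)
    convert h using 2
    simp only [hm]; ring
  have hden : Tendsto (fun k => D k * (1 - G k) + E k * G k) atTop (nhds 1) := by
    have h := (hDlim.mul (hGlim.const_sub 1)).add (hElim.mul hGlim)
    convert h using 2
    ring
  have hainv : Tendsto (fun k => (a k)⁻¹) atTop (nhds m) := by
    have h := hnum.div hden one_ne_zero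
    rw [div_one] at h
    refine h.congr' ?_
    filter_upwards [hden.eventually_ne one_ne_zero] with k hk
    have h1 := hlin k
    have h2 := (hapos k).ne'
    simp only [Pi.div_apply]
    rw [div_eq_iff hk, ← h1, inv_mul_cancel_left₀ h2]
  have hfin : Tendsto (fun k => (a k)⁻¹ ^ (1 / rk k)) atTop (nhds (m ^ (1 / r))) :=
    hainv.rpow (tendsto_const_nhds.div hrconv hr0) (Or.inl hmpos.ne')
  refine hfin.congr fun k => ?_
  simp only [ha]
  rw [one_div, Real.inv_rpow (hxpos k).le, inv_inv, ← Real.rpow_mul (hxpos k).le,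
    mul_one_div_cancel (hrk0 k), Real.rpow_one]
end
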